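/- Let N be a normal subgroup of a finite group G and let λ, ψ ∈ Irr(N) be G-invariant with ψ(1) > 1, λψ ∈ Irr(N), and suppose ψ extends to an 𝔽-valued irreducible character χ of G (𝔽 ∈ {ℚ,ℝ,ℂ}). If the set of 𝔽-valued non-linear irreducible constituents of λ^G is nonempty, then the average degree of the 𝔽-valued non-linear irreducible constituents of λ^G together with those of (λψ)^G is at least λ(1)(ψ(1)+1)/2. -/

import Mathlib

open scoped BigOperators Classical
open CategoryTheory

/-- `χ : G → ℂ` is the character of an irreducible complex representation of `G`. -/
def IsIrrChar (G : Type) [Group G] (χ : G → ℂ) : Prop :=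
  ∃ V : FDRep ℂ G, Simple V ∧ ∀ g, V.character g = χ g

/-- A character is rational-valued if all its values lie in `ℚ`. -/
def RatValued {G : Type} (χ : G → ℂ) : Prop := ∀ g, ∃ q : ℚ, χ g = (q : ℂ)

/-- A character is real-valued if all its values lie in `ℝ`. -/
def RealValued {G : Type} (χ : G → ℂ) : Prop := ∀ g, (χ g).im = 0

/-- A character has even degree. -/
def EvenDeg {G : Type} [One G] (χ : G → ℂ) : Prop := ∃ k : ℕ, χ 1 = ((2 * k : ℕ) : ℂ)

/-- The kernel of the character `χ` contains the subgroup `N`. -/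
def KerContains {G : Type} [Group G] (χ : G → ℂ) (N : Subgroup G) : Prop :=
  ∀ n ∈ N, χ n = χ 1

/-- The induced class function `f ^ G` of `f : N → ℂ`. -/
noncomputable def Ind {G : Type} [Group G] [Fintype G] (N : Subgroup G) (f : ↥N → ℂ) : G → ℂ :=
  fun g => (Nat.card N : ℂ)⁻¹ *
    ∑ x : G, if h : x⁻¹ * g * x ∈ N then f ⟨x⁻¹ * g * x, h⟩ else 0

/-- The standard inner product of class functions on a finite group. -/
noncomputable def cInner {G : Type} [Fintype G] (f g : G → ℂ) : ℂ :=
  (Fintype.card G : ℂ)⁻¹ * ∑ x : G, f x * (starRingEnd ℂ) (g x)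

/-- `χ` is an irreducible constituent of the class function `f`. -/
def IsConstituent {G : Type} [Group G] [Fintype G] (f χ : G → ℂ) : Prop :=
  IsIrrChar G χ ∧ cInner f χ ≠ 0

lemma lam_congr {G : Type} [Group G] {N : Subgroup G} (lam : ↥N → ℂ)
    {x y : G} (px : x ∈ N) (py : y ∈ N) (h : x = y) : lam ⟨x, px⟩ = lam ⟨y, py⟩ := by
  subst h; rfl

/-- The inertia group `I_G(λ)` of a character `λ` of a normal subgroup `N` of `G`. -/
def inertia {G : Type} [Group G] (N : Subgroup G) [hN : N.Normal] (lam : ↥N → ℂ) :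
    Subgroup G where
  carrier := {g | ∀ n : ↥N, lam ⟨g * n * g⁻¹, hN.conj_mem n n.2 g⟩ = lam n}
  one_mem' := by
    intro n
    exact lam_congr lam _ n.2 (by group)
  mul_mem' := by
    intro a b ha hb n
    have h1 := ha ⟨(b : G) * n * b⁻¹, hN.conj_mem _ n.2 b⟩
    calc lam ⟨(a * b) * n * (a * b)⁻¹, _⟩
        = lam ⟨a * ((b : G) * n * b⁻¹) * a⁻¹, hN.conj_mem _ (hN.conj_mem _ n.2 b) a⟩ :=
          lam_congr lam _ _ (by group)
      _ = lam ⟨(b : G) * n * b⁻¹, hN.conj_mem _ n.2 b⟩ := h1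
      _ = lam n := hb n
  inv_mem' := by
    intro a ha n
    have h1 := ha ⟨a⁻¹ * (n : G) * a⁻¹⁻¹, hN.conj_mem _ n.2 a⁻¹⟩
    have h2 : lam ⟨a * (a⁻¹ * (n : G) * a⁻¹⁻¹) * a⁻¹,
        hN.conj_mem _ (hN.conj_mem _ n.2 a⁻¹) a⟩ = lam n :=
      lam_congr lam _ n.2 (by group)
    exact h1.symm.trans h2

/-!
A `G`-invariant `λ ∈ Irr(N)` lies below `θ ∈ Irr(G)` only if `θ_N = eλ` for some `e ≥ 1` (Clifford),
so the constituents of `λ^G` have degree at least `λ(1)`, those of `(λψ)^G` have degree at least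
`λ(1)ψ(1)`, and the two sets are disjoint as soon as `ψ(1) > 1`. If `χ` extends `ψ`, then `θ ↦ θχ`
injects the first set into the second: `f ↦ f ⊗ 1` embeds `Hom_N(V, V')` into
`Hom_N(V ⊗ W, V' ⊗ W)`, both spaces have dimension `ee'` because `λ` and `λψ` are irreducible, and
an isomorphism over `N` restricts to one over `G`, whence `⟨θχ, θ'χ⟩ = ⟨θ, θ'⟩`. So at least half of
the degrees are at least `λ(1)ψ(1)` and the others are at least `λ(1)`.
-/

open Module Representation

section Schur

variable {k G V : Type*} [Field k] [Group G] [AddCommGroup V] [Module k V]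
  {ρ : Representation k G V}

theorem exists_eq_smul_one_of_commute (hρ : finrank k (IntertwiningMap ρ ρ) = 1)
    {T : End k V} (hT : ∀ g, T * ρ g = ρ g * T) : ∃ c : k, T = c • 1 := by
  have : Nontrivial (IntertwiningMap ρ ρ) := nontrivial_of_finrank_pos (hρ ▸ zero_lt_one)
  obtain ⟨c, hc⟩ :=
    (finrank_eq_one_iff_of_nonzero' (1 : IntertwiningMap ρ ρ) one_ne_zero).1 hρ ⟨T, hT⟩
  exact ⟨c, congr(($hc).toLinearMap).symm⟩

theorem exists_sum_mul_char_mul_eq (hρ : finrank k (IntertwiningMap ρ ρ) = 1)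
    {ι : Type*} [Fintype ι] {f : ι → k} {u : ι → G} (e : G → Equiv.Perm ι)
    (hf : ∀ g i, f (e g i) = f i) (hu : ∀ g i, u (e g i) = g * u i * g⁻¹) :
    ∃ c : k, ∀ g, ∑ i, f i * ρ.character (u i * g) = c * ρ.character g := by
  have hcomm (g : G) : (∑ i, f i • ρ (u i)) * ρ g = ρ g * ∑ i, f i • ρ (u i) := by
    rw [Finset.sum_mul, Finset.mul_sum, ← Equiv.sum_comp (e g)]
    refine Finset.sum_congr rfl fun i _ => ?_
    rw [hf, hu, smul_mul_assoc, mul_smul_comm, ← map_mul, ← map_mul, inv_mul_cancel_right]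
  obtain ⟨c, hc⟩ := exists_eq_smul_one_of_commute hρ hcomm
  refine ⟨c, fun g => ?_⟩
  have htrace := congr(LinearMap.trace k V ($hc * ρ g))
  simpa only [Finset.sum_mul, smul_mul_assoc, one_mul, map_sum, map_smul, ← map_mul,
    smul_eq_mul, Representation.character] using htrace

end Schur

section Clifford

variable {k G V L : Type*} [Field k] [Group G] {N : Subgroup G} [N.Normal] [Fintype N]
  [AddCommGroup V] [Module k V] [AddCommGroup L] [Module k L]
  {ρ : Representation k G V} {τ : Representation k N L}

/- Both sums `∑ τ(n⁻¹)θ(nm)` and `∑ θ(n⁻¹)τ(nm)` come from central operators, so the first is a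
fixed multiple of `θ(m)` and the second a fixed multiple of `τ(m)`; but they are equal. -/
theorem char_mul_char_one_eq_of_sum_ne_zero (hρ : finrank k (IntertwiningMap ρ ρ) = 1)
    (hτ : finrank k (IntertwiningMap τ τ) = 1)
    (hinv : ∀ g n, τ.character (MulAut.conjNormal g n) = τ.character n)
    (hne : ∑ n : N, τ.character n * ρ.character (n : G)⁻¹ ≠ 0) (m : N) :
    ρ.character m * τ.character 1 = ρ.character 1 * τ.character m := by
  obtain ⟨c, hc⟩ := exists_sum_mul_char_mul_eq hρ (f := fun n : N => τ.character n⁻¹)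
    (u := fun n => (n : G)) (fun g => (MulAut.conjNormal g).toEquiv)
    (fun g n => by simpa using hinv g n⁻¹) (fun g n => MulAut.conjNormal_apply g n)
  obtain ⟨d, hd⟩ := exists_sum_mul_char_mul_eq hτ (f := fun n : N => ρ.character (n : G)⁻¹)
    (u := id) (fun g => (MulAut.conj g).toEquiv)
    (fun g n => by simpa [mul_assoc] using ρ.char_conj (n : G)⁻¹ (g : G)) (fun g n => rfl)
  have hcd (m : N) : c * ρ.character m = d * τ.character m := by
    rw [← hc, ← hd, ← Equiv.sum_comp ((Equiv.mulRight m).trans (Equiv.inv N))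
      fun n => ρ.character (n : G)⁻¹ * τ.character (id n * m)]
    refine Finset.sum_congr rfl fun n _ => ?_
    simp [mul_comm, ← τ.char_conj n⁻¹ m⁻¹]
  have hd_one : d * τ.character 1 ≠ 0 := by simpa only [← hd, id, mul_one, mul_comm] using hne
  have hcd_one : c * ρ.character 1 = d * τ.character 1 := hcd 1
  refine mul_left_cancel₀ (left_ne_zero_of_mul hd_one) ?_
  linear_combination ρ.character 1 * hcd m - ρ.character m * hcd_one

end Clifford

section Tensor

variable {k G V V' W : Type*} [Field k] [Group G] [AddCommGroup V] [Module k V]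
  [AddCommGroup V'] [Module k V'] [AddCommGroup W] [Module k W]
  {ρ : Representation k G V} {ρ' : Representation k G V'}

/-- Tensoring an intertwining map with the identity of a fixed representation `ω`, as a linear map
between the spaces of intertwining maps. -/
noncomputable def intertwiningRTensor (ω : Representation k G W) :
    IntertwiningMap ρ ρ' →ₗ[k] IntertwiningMap (tprod ρ ω) (tprod ρ' ω) where
  toFun f := f.rTensor ω
  map_add' := IntertwiningMap.rTensor_add
  map_smul' := IntertwiningMap.rTensor_smul

variable (ω : Representation k G W)

theorem intertwiningRTensor_injective [Nontrivial W] :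
    Function.Injective (intertwiningRTensor (ρ := ρ) (ρ' := ρ') ω) := by
  rw [injective_iff_map_eq_zero]
  intro f hf
  apply IntertwiningMap.ext
  exact (FaithfullyFlat.zero_iff_rTensor_zero k W _).2 congr(($hf).toLinearMap)

theorem isIntertwining_of_rTensor [Nontrivial W] {f : V →ₗ[k] V'} {g : G}
    (h : f.rTensor W ∘ₗ tprod ρ ω g = tprod ρ' ω g ∘ₗ f.rTensor W) :
    f ∘ₗ ρ g = ρ' g ∘ₗ f := by
  rw [← sub_eq_zero, FaithfullyFlat.zero_iff_rTensor_zero k W, LinearMap.rTensor_sub, sub_eq_zero]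
  have hinv : ω g ∘ₗ ω g⁻¹ = LinearMap.id := by
    rw [← End.mul_eq_comp, ← map_mul, mul_inv_cancel, map_one, End.one_eq_id]
  simpa only [Representation.tprod_apply, LinearMap.rTensor, LinearMap.lTensor,
    ← TensorProduct.map_comp, LinearMap.comp_id, LinearMap.id_comp, hinv] using
    congr($h ∘ₗ (ω g⁻¹).lTensor V)

variable {H : Type*} [Group H] (φ : H →* G)

theorem intertwiningRTensor_surjective_of_comp [Nontrivial W]
    (h : Function.Surjective (intertwiningRTensor
      (ρ := ρ.comp φ) (ρ' := ρ'.comp φ) (ω.comp φ : Representation k H W))) :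
    Function.Surjective (intertwiningRTensor (ρ := ρ) (ρ' := ρ') ω) := by
  intro F
  obtain ⟨f, hf⟩ := h ⟨F.toLinearMap, fun x => F.isIntertwining' (φ x)⟩
  have hfF : f.toLinearMap.rTensor W = F.toLinearMap := congr(($hf).toLinearMap)
  refine ⟨⟨f.toLinearMap, fun g => isIntertwining_of_rTensor ω ?_⟩, IntertwiningMap.ext hfF⟩
  rw [hfF]
  exact F.isIntertwining' g

theorem finrank_intertwiningMap_tprod_eq_of_comp [FiniteDimensional k V] [FiniteDimensional k V']
    [FiniteDimensional k W] [Nontrivial W]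
    (h : finrank k (IntertwiningMap (ρ.comp φ) (ρ'.comp φ)) =
      finrank k (IntertwiningMap (tprod (ρ.comp φ) (ω.comp φ : Representation k H W))
        (tprod (ρ'.comp φ) (ω.comp φ)))) :
    finrank k (IntertwiningMap (tprod ρ ω) (tprod ρ' ω)) = finrank k (IntertwiningMap ρ ρ') := by
  have hsurj := (LinearMap.injective_iff_surjective_of_finrank_eq_finrank h).1
    (intertwiningRTensor_injective _)
  exact (LinearEquiv.ofBijective (intertwiningRTensor ω) ⟨intertwiningRTensor_injective ω,
    intertwiningRTensor_surjective_of_comp ω φ hsurj⟩).finrank_eq.symm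

end Tensor

section Conjugate

variable {𝕜 G : Type*} [RCLike 𝕜] [Group G]

open Matrix ComplexOrder in
theorem trace_map_inv_eq_star_trace [Finite G] {n : Type*} [Fintype n] [DecidableEq n]
    (M : G →* Matrix n n 𝕜) (g : G) : (M g⁻¹).trace = star (M g).trace := by
  have := Fintype.ofFinite G
  have hM (x y : G) : M (x * y) = M x * M y := map_mul M x y
  obtain ⟨H, hH⟩ : IsUnit (∑ x, (M x)ᴴ * M x) := by
    refine (posDef_sum Finset.univ_nonempty fun x _ => ?_).isUnit
    refine PosDef.conjTranspose_mul_self _ (mulVec_injective_iff_isUnit.2 ?_)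
    exact (Group.isUnit x).map M
  have hinvariant : (M g)ᴴ * H * M g = H := by
    rw [hH, Finset.mul_sum, Finset.sum_mul]
    refine Fintype.sum_equiv (Equiv.mulRight g) _ _ fun x => ?_
    simp only [Equiv.coe_mulRight, hM, conjTranspose_mul, mul_assoc]
  have hconj : M g⁻¹ = (H⁻¹ : (Matrix n n 𝕜)ˣ) * ((M g)ᴴ * H) := by
    rw [Units.eq_inv_mul_iff_mul_eq]
    calc H * M g⁻¹ = (M g)ᴴ * H * M g * M g⁻¹ := by rw [hinvariant]
      _ = (M g)ᴴ * H := by rw [mul_assoc, ← hM, mul_inv_cancel, map_one, mul_one]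
  rw [hconj, ← mul_assoc, trace_units_conj', trace_conjTranspose]

theorem char_inv_eq_conj [Finite G] {V : Type*} [AddCommGroup V] [Module 𝕜 V]
    [FiniteDimensional 𝕜 V] (ρ : Representation 𝕜 G V) (g : G) :
    ρ.character g⁻¹ = starRingEnd 𝕜 (ρ.character g) := by
  let b := finBasis 𝕜 V
  simp only [Representation.character, LinearMap.trace_eq_matrix_trace 𝕜 b]
  exact trace_map_inv_eq_star_trace
    ((MonoidHomClass.toMonoidHom (LinearMap.toMatrixAlgEquiv b)).comp ρ) g

end Conjugate

section Sesquilinear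

variable {G : Type} [Fintype G] (a : ℂ) (f g : G → ℂ)

theorem cInner_const_mul_left : cInner (fun x => a * f x) g = a * cInner f g := by
  simp only [cInner, Finset.mul_sum]
  exact Finset.sum_congr rfl fun x _ => by ring

theorem cInner_const_mul_right :
    cInner f (fun x => a * g x) = starRingEnd ℂ a * cInner f g := by
  simp only [cInner, Finset.mul_sum, map_mul]
  exact Finset.sum_congr rfl fun x _ => by ring

end Sesquilinear

section Characters

variable {G : Type} [Group G] [Fintype G]

section Representation

variable {V V' W : Type*} [AddCommGroup V] [Module ℂ V]
  [AddCommGroup V'] [Module ℂ V'] [FiniteDimensional ℂ V']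
  [AddCommGroup W] [Module ℂ W] [FiniteDimensional ℂ W]

theorem cInner_char (ρ : Representation ℂ G V) (ρ' : Representation ℂ G V') :
    cInner ρ.character ρ'.character =
      (Nat.card G : ℂ)⁻¹ * ∑ g, ρ.character g * ρ'.character g⁻¹ := by
  simp only [cInner, char_inv_eq_conj, Nat.card_eq_fintype_card]

variable [FiniteDimensional ℂ V]

theorem cInner_char_eq_finrank (ρ : Representation ℂ G V) (ρ' : Representation ℂ G V') :
    cInner ρ.character ρ'.character = finrank ℂ (IntertwiningMap ρ' ρ) := by
  have : Invertible (Nat.card G : ℂ) := invertibleOfNonzero (by simp)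
  rw [cInner_char, card_inv_mul_sum_char_mul_char_eq_finrank]

theorem cInner_char_mul_eq_of_comp {H : Type} [Group H] [Fintype H] (φ : H →* G)
    (ρ : Representation ℂ G V) (ρ' : Representation ℂ G V') (ω : Representation ℂ G W)
    [Nontrivial W]
    (h : cInner (fun x => ρ.character (φ x) * ω.character (φ x))
        (fun x => ρ'.character (φ x) * ω.character (φ x)) =
      cInner (fun x => ρ.character (φ x)) (fun x => ρ'.character (φ x))) :
    cInner (ρ.character * ω.character) (ρ'.character * ω.character) =
      cInner ρ.character ρ'.character := by
  rw [← char_tensor, ← char_tensor, cInner_char_eq_finrank, cInner_char_eq_finrank, Nat.cast_inj]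
  apply finrank_intertwiningMap_tprod_eq_of_comp ω φ
  rw [← Nat.cast_inj (R := ℂ), ← cInner_char_eq_finrank, ← cInner_char_eq_finrank,
    char_tensor, char_tensor]
  exact h.symm

end Representation

theorem isIrrChar_iff_cInner_self {χ : G → ℂ} :
    IsIrrChar G χ ↔ (∃ V : FDRep ℂ G, V.character = χ) ∧ cInner χ χ = 1 := by
  have hsimple (V : FDRep ℂ G) : Simple V ↔ cInner V.character V.character = 1 := by
    rw [FDRep.simple_iff_char_is_norm_one, eq_comm, ← inv_mul_eq_one₀ (by simp)]
    exact iff_of_eq congr($(cInner_char V.ρ V.ρ) = 1).symm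
  constructor
  · rintro ⟨V, hV, hχ⟩
    obtain rfl : V.character = χ := funext hχ
    exact ⟨⟨V, rfl⟩, (hsimple V).1 hV⟩
  · rintro ⟨⟨V, rfl⟩, hV⟩
    exact ⟨V, (hsimple V).2 hV, fun _ => rfl⟩

end Characters

namespace IsIrrChar

variable {G : Type} [Group G] {χ θ : G → ℂ}

theorem cInner_self [Fintype G] (hχ : IsIrrChar G χ) : cInner χ χ = 1 :=
  (isIrrChar_iff_cInner_self.1 hχ).2

theorem apply_conj (hχ : IsIrrChar G χ) (x g : G) : χ (x * g * x⁻¹) = χ g := by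
  obtain ⟨V, -, hV⟩ := hχ
  rw [← hV, ← hV, V.char_conj]

theorem exists_rep [Finite G] (hχ : IsIrrChar G χ) :
    ∃ V : FDRep ℂ G, V.character = χ ∧ finrank ℂ (IntertwiningMap V.ρ V.ρ) = 1 ∧
      Nontrivial V := by
  have := Fintype.ofFinite G
  obtain ⟨⟨V, rfl⟩, hnorm⟩ := isIrrChar_iff_cInner_self.1 hχ
  have hone : finrank ℂ (IntertwiningMap V.ρ V.ρ) = 1 := by
    exact_mod_cast (cInner_char_eq_finrank V.ρ V.ρ).symm.trans hnorm
  have hnontrivial : Nontrivial (IntertwiningMap V.ρ V.ρ) :=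
    nontrivial_of_finrank_pos (hone ▸ zero_lt_one)
  obtain ⟨T, hT⟩ := exists_ne (0 : IntertwiningMap V.ρ V.ρ)
  obtain ⟨v, hv⟩ := DFunLike.exists_ne hT
  exact ⟨V, rfl, hone, nontrivial_of_ne _ _ hv⟩

theorem exists_pos_natCast_eq_apply_one [Finite G] (hχ : IsIrrChar G χ) :
    ∃ d : ℕ, 0 < d ∧ χ 1 = d := by
  obtain ⟨V, rfl, -, _⟩ := hχ.exists_rep
  exact ⟨finrank ℂ V, finrank_pos, V.char_one⟩

theorem re_apply_one_pos [Finite G] (hχ : IsIrrChar G χ) : 0 < (χ 1).re := by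
  obtain ⟨d, hd, hχd⟩ := hχ.exists_pos_natCast_eq_apply_one
  rw [hχd, Complex.natCast_re]
  exact_mod_cast hd

theorem re_mul_apply_one [Finite G] (hχ : IsIrrChar G χ) (z : ℂ) :
    (z * χ 1).re = z.re * (χ 1).re := by
  obtain ⟨d, -, hχd⟩ := hχ.exists_pos_natCast_eq_apply_one
  simp [hχd]

theorem eq_of_cInner_ne_zero [Fintype G] (hθ : IsIrrChar G θ) (hχ : IsIrrChar G χ)
    (h : cInner θ χ ≠ 0) : θ = χ := by
  have : Invertible (Nat.card G : ℂ) := invertibleOfNonzero (by simp)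
  obtain ⟨U, hU, hθU⟩ := hθ
  obtain ⟨V, hV, hχV⟩ := hχ
  obtain rfl : U.character = θ := funext hθU
  obtain rfl : V.character = χ := funext hχV
  have horth : cInner U.character V.character = if Nonempty (U ≅ V) then 1 else 0 :=
    (cInner_char U.ρ V.ρ).trans (FDRep.char_orthonormal U V)
  obtain ⟨e⟩ : Nonempty (U ≅ V) := by_contra fun hUV => h (by rw [horth, if_neg hUV])
  exact FDRep.char_iso e

end IsIrrChar

section Constituents

variable {G : Type} [Group G] [Fintype G]

theorem cInner_ind (N : Subgroup G) (f : N → ℂ) {θ : G → ℂ}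
    (hθ : ∀ x g, θ (x * g * x⁻¹) = θ g) :
    cInner (Ind N f) θ = cInner f fun n => θ n := by
  have htranslate (x : G) :
      ∑ g : G, (if h : x⁻¹ * g * x ∈ N then f ⟨x⁻¹ * g * x, h⟩ else 0) * starRingEnd ℂ (θ g) =
        ∑ n : N, f n * starRingEnd ℂ (θ n) := by
    refine (Fintype.sum_of_injective (fun n : N => x * n * x⁻¹) ?_ _ _ ?_ ?_).symm
    · exact (MulAut.conj x).injective.comp Subtype.val_injective
    · intro g hg
      rw [dif_neg, zero_mul]
      exact fun h => hg ⟨⟨_, h⟩, by group⟩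
    · intro n
      have hcancel : x⁻¹ * (x * n * x⁻¹) * x = n := by group
      simp only [hcancel, hθ, n.2, dif_pos, Subtype.coe_eta]
  simp only [cInner, _root_.Ind, mul_assoc _ (Finset.sum _ _), Finset.sum_mul]
  rw [← Finset.mul_sum, Finset.sum_comm]
  simp only [htranslate, Finset.sum_const, Finset.card_univ, nsmul_eq_mul,
    Nat.card_eq_fintype_card]
  field_simp

variable {N : Subgroup G} {f f' : N → ℂ} {θ θ' χ : G → ℂ}

theorem isConstituent_ind_iff :
    IsConstituent (Ind N f) θ ↔ IsIrrChar G θ ∧ cInner f (fun n => θ n) ≠ 0 :=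
  and_congr_right fun hθ => by rw [cInner_ind N f hθ.apply_conj]

variable [N.Normal]

namespace IsConstituent

theorem exists_natCast_mul_of_ind (hθ : IsConstituent (Ind N f) θ) (hf : IsIrrChar N f)
    (hinv : ∀ (g : G) (n : N), f (MulAut.conjNormal g n) = f n) :
    ∃ e : ℕ, 0 < e ∧ ∀ n : N, θ n = e * f n := by
  obtain ⟨hirr, hne⟩ := isConstituent_ind_iff.1 hθ
  obtain ⟨V, rfl, hV, _⟩ := hirr.exists_rep
  obtain ⟨L, rfl, hL, _⟩ := hf.exists_rep
  have hV_one : V.character 1 ≠ 0 := by simp [V.char_one, finrank_pos.ne']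
  have hL_one : L.character 1 ≠ 0 := by simp [L.char_one, finrank_pos.ne']
  have hsum : ∑ n : N, L.character n * V.character (n : G)⁻¹ ≠ 0 :=
    right_ne_zero_of_mul ((cInner_char L.ρ (V.ρ.comp N.subtype)).symm.trans_ne hne)
  have hscalar (n : N) : V.character n = V.character 1 / L.character 1 * L.character n := by
    rw [div_mul_eq_mul_div, eq_div_iff hL_one]
    exact char_mul_char_one_eq_of_sum_ne_zero hV hL hinv hsum n
  have hmultiplicity : V.character 1 / L.character 1 =
      finrank ℂ (IntertwiningMap L.ρ (V.ρ.comp N.subtype)) := by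
    rw [← cInner_char_eq_finrank, ← mul_one (_ / _), ← hf.cInner_self, ← cInner_const_mul_left]
    exact congr(cInner $(funext hscalar) L.character).symm
  refine ⟨_, Nat.pos_of_ne_zero fun h => ?_, hmultiplicity ▸ hscalar⟩
  rw [h, Nat.cast_zero] at hmultiplicity
  exact div_ne_zero hV_one hL_one hmultiplicity

theorem apply_one_le_of_ind (hθ : IsConstituent (Ind N f) θ) (hf : IsIrrChar N f)
    (hinv : ∀ (g : G) (n : N), f (MulAut.conjNormal g n) = f n) : (f 1).re ≤ (θ 1).re := by
  obtain ⟨e, he, hθf⟩ := hθ.exists_natCast_mul_of_ind hf hinv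
  have hdegree : θ 1 = e * f 1 := hθf 1
  have he_one : (1 : ℝ) ≤ e := Nat.one_le_cast.2 he
  rw [hdegree, ← nsmul_eq_mul, Complex.re_nsmul, nsmul_eq_mul]
  exact le_mul_of_one_le_left hf.re_apply_one_pos.le he_one

theorem eq_of_ind (hθ : IsConstituent (Ind N f) θ) (hθ' : IsConstituent (Ind N f') θ)
    (hf : IsIrrChar N f) (hf' : IsIrrChar N f')
    (hinv : ∀ (g : G) (n : N), f (MulAut.conjNormal g n) = f n) : f' = f := by
  obtain ⟨e, -, hθf⟩ := hθ.exists_natCast_mul_of_ind hf hinv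
  have hne := (isConstituent_ind_iff.1 hθ').2
  rw [funext hθf, cInner_const_mul_right] at hne
  exact hf'.eq_of_cInner_ne_zero hf (right_ne_zero_of_mul hne)

theorem not_isConstituent_ind_mul (hθ : IsConstituent (Ind N f) θ) (hf : IsIrrChar N f)
    (hinv : ∀ (g : G) (n : N), f (MulAut.conjNormal g n) = f n)
    (hfχ : IsIrrChar N fun n => f n * χ n) (hχ : χ 1 ≠ 1) :
    ¬ IsConstituent (Ind N fun n => f n * χ n) θ := by
  intro hθ'
  have hone : f 1 * χ 1 = f 1 := congr($(hθ.eq_of_ind hθ' hf hfχ hinv) 1)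
  have hf_one : f 1 ≠ 0 := fun h => hf.re_apply_one_pos.ne' (by rw [h, Complex.zero_re])
  exact hχ ((mul_eq_left₀ hf_one).1 hone)

theorem cInner_mul_of_ind (hθ : IsConstituent (Ind N f) θ) (hθ' : IsConstituent (Ind N f) θ')
    (hf : IsIrrChar N f) (hinv : ∀ (g : G) (n : N), f (MulAut.conjNormal g n) = f n)
    (hχ : IsIrrChar G χ) (hfχ : IsIrrChar N fun n => f n * χ n) :
    cInner (θ * χ) (θ' * χ) = cInner θ θ' := by
  obtain ⟨e, -, hθf⟩ := hθ.exists_natCast_mul_of_ind hf hinv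
  obtain ⟨e', -, hθf'⟩ := hθ'.exists_natCast_mul_of_ind hf hinv
  obtain ⟨V, rfl, -⟩ := hθ.1.exists_rep
  obtain ⟨V', rfl, -⟩ := hθ'.1.exists_rep
  obtain ⟨W, rfl, -, _⟩ := hχ.exists_rep
  refine cInner_char_mul_eq_of_comp N.subtype V.ρ V'.ρ W.ρ ?_
  change cInner (fun n : N => V.character n * W.character n)
    (fun n => V'.character n * W.character n) =
      cInner (fun n : N => V.character n) (fun n => V'.character n)
  simp only [hθf, hθf', mul_assoc, cInner_const_mul_left, cInner_const_mul_right,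
    hf.cInner_self, hfχ.cInner_self]

theorem mul_of_ind (hθ : IsConstituent (Ind N f) θ) (hf : IsIrrChar N f)
    (hinv : ∀ (g : G) (n : N), f (MulAut.conjNormal g n) = f n) (hχ : IsIrrChar G χ)
    (hfχ : IsIrrChar N fun n => f n * χ n) :
    IsConstituent (Ind N fun n => f n * χ n) (θ * χ) := by
  obtain ⟨e, he, hθf⟩ := hθ.exists_natCast_mul_of_ind hf hinv
  have hirr : IsIrrChar G (θ * χ) := by
    refine isIrrChar_iff_cInner_self.2 ⟨?_, ?_⟩
    · obtain ⟨V, rfl, -⟩ := hθ.1.exists_rep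
      obtain ⟨W, rfl, -⟩ := hχ.exists_rep
      exact ⟨FDRep.of (tprod V.ρ W.ρ), char_tensor V.ρ W.ρ⟩
    · rw [hθ.cInner_mul_of_ind hθ hf hinv hχ hfχ, hθ.1.cInner_self]
  refine isConstituent_ind_iff.2 ⟨hirr, ?_⟩
  simp only [Pi.mul_apply, hθf, mul_assoc, cInner_const_mul_right, hfχ.cInner_self]
  simpa using he.ne'

theorem eq_of_mul_eq_mul_of_ind (hθ : IsConstituent (Ind N f) θ)
    (hθ' : IsConstituent (Ind N f) θ') (hf : IsIrrChar N f)
    (hinv : ∀ (g : G) (n : N), f (MulAut.conjNormal g n) = f n) (hχ : IsIrrChar G χ)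
    (hfχ : IsIrrChar N fun n => f n * χ n) (h : θ * χ = θ' * χ) : θ = θ' := by
  refine hθ.1.eq_of_cInner_ne_zero hθ'.1 ?_
  rw [← hθ.cInner_mul_of_ind hθ' hf hinv hχ hfχ, ← h, hθ.cInner_mul_of_ind hθ hf hinv hχ hfχ,
    hθ.1.cInner_self]
  exact one_ne_zero

end IsConstituent

end Constituents

theorem half_add_le_sum_div_card {ι K : Type*} [DecidableEq ι] [Field K] [LinearOrder K]
    [IsStrictOrderedRing K] {S T : Finset ι} {w : ι → K} {a b : K} (hTS : T ⊆ S) (hT : T.Nonempty)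
    (hcard : T.card ≤ (S \ T).card) (hab : a ≤ b) (ha : ∀ i ∈ T, a ≤ w i)
    (hb : ∀ i ∈ S \ T, b ≤ w i) : (a + b) / 2 ≤ (∑ i ∈ S, w i) / S.card := by
  have hS : (0 : K) < S.card := Nat.cast_pos.2 (hT.mono hTS).card_pos
  have hsumT : T.card * a ≤ ∑ i ∈ T, w i := by simpa using T.card_nsmul_le_sum w a ha
  have hsumST : (S \ T).card * b ≤ ∑ i ∈ S \ T, w i := by
    simpa using (S \ T).card_nsmul_le_sum w b hb
  have hle : (T.card : K) ≤ (S \ T).card := Nat.cast_le.2 hcard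
  have hsum : (S.card : K) = (S \ T).card + T.card := by
    rw [← Nat.cast_add, Finset.card_sdiff_add_card_eq_card hTS]
  rw [le_div_iff₀ hS, ← Finset.sum_sdiff hTS, hsum]
  nlinarith [mul_nonneg (sub_nonneg.2 hle) (sub_nonneg.2 hab)]

theorem RatValued.mul {G : Type} {θ χ : G → ℂ} (hθ : RatValued θ) (hχ : RatValued χ) :
    RatValued (θ * χ) := fun g => by
  obtain ⟨p, hp⟩ := hθ g
  obtain ⟨q, hq⟩ := hχ g
  exact ⟨p * q, by rw [Pi.mul_apply, hp, hq, Rat.cast_mul]⟩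

theorem RealValued.mul {G : Type} {θ χ : G → ℂ} (hθ : RealValued θ) (hχ : RealValued χ) :
    RealValued (θ * χ) := fun g => by
  rw [Pi.mul_apply, Complex.mul_im, hθ g, hχ g, mul_zero, zero_mul, add_zero]

theorem stmt19_general {G : Type} [Group G] [Fintype G] {N : Subgroup G} [N.Normal]
    {lam : N → ℂ} {χ : G → ℂ} (hlam : IsIrrChar N lam)
    (hinv : ∀ (g : G) (n : N), lam (MulAut.conjNormal g n) = lam n) (hχ : IsIrrChar G χ)
    (hdeg : 1 < (χ 1).re) (hprod : IsIrrChar N fun n => lam n * χ n)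
    {P : (G → ℂ) → Prop} (hP : ∀ θ, P θ → P (θ * χ))
    (hne : ∃ θ, IsConstituent (Ind N lam) θ ∧ P θ) {S : Finset (G → ℂ)}
    (hS : ∀ θ, θ ∈ S ↔
      (IsConstituent (Ind N lam) θ ∨ IsConstituent (Ind N fun n => lam n * χ n) θ) ∧ P θ) :
    (lam 1).re * ((χ 1).re + 1) / 2 ≤ (∑ θ ∈ S, (θ 1).re) / S.card := by
  have hχ_one : χ 1 ≠ 1 := fun h => by simp [h] at hdeg
  have hprodinv (g : G) (n : N) : lam (MulAut.conjNormal g n) * χ (MulAut.conjNormal g n : N) =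
      lam n * χ n := by
    rw [hinv, MulAut.conjNormal_apply, hχ.apply_conj]
  have hmem {θ : G → ℂ} : θ ∈ S.filter (IsConstituent (Ind N lam)) ↔
      IsConstituent (Ind N lam) θ ∧ P θ := by
    rw [Finset.mem_filter, hS]
    tauto
  have hmem_sdiff {θ : G → ℂ} : θ ∈ S \ S.filter (IsConstituent (Ind N lam)) ↔
      IsConstituent (Ind N fun n => lam n * χ n) θ ∧ P θ := by
    rw [Finset.mem_sdiff, hmem, hS]
    have := fun h : IsConstituent (Ind N lam) θ =>
      h.not_isConstituent_ind_mul hlam hinv hprod hχ_one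
    tauto
  have hcard : (S.filter (IsConstituent (Ind N lam))).card ≤
      (S \ S.filter (IsConstituent (Ind N lam))).card := by
    refine Finset.card_le_card_of_injOn (· * χ) (fun θ hθ => ?_) fun θ hθ θ' hθ' heq => ?_
    · obtain ⟨hθ, hPθ⟩ := hmem.1 hθ
      exact hmem_sdiff.2 ⟨hθ.mul_of_ind hlam hinv hχ hprod, hP θ hPθ⟩
    · exact (hmem.1 hθ).1.eq_of_mul_eq_mul_of_ind (hmem.1 hθ').1 hlam hinv hχ hprod heq
  have hle : (lam 1).re ≤ (lam 1 * χ 1).re :=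
    hχ.re_mul_apply_one _ ▸ le_mul_of_one_le_right hlam.re_apply_one_pos.le hdeg.le
  obtain ⟨θ, hθ⟩ := hne
  calc (lam 1).re * ((χ 1).re + 1) / 2 = ((lam 1).re + (lam 1 * χ 1).re) / 2 := by
        rw [hχ.re_mul_apply_one]; ring
    _ ≤ (∑ θ ∈ S, (θ 1).re) / S.card :=
        half_add_le_sum_div_card (Finset.filter_subset _ S) ⟨θ, hmem.2 hθ⟩ hcard hle
          (fun θ hθ => (hmem.1 hθ).1.apply_one_le_of_ind hlam hinv)
          (fun θ hθ => (hmem_sdiff.1 hθ).1.apply_one_le_of_ind hprod hprodinv)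

/-- Let `λ, ψ ∈ Irr(N)` be `G`-invariant with `ψ(1) > 1`, `λψ ∈ Irr(N)`, and suppose `ψ`
extends to an `𝔽`-valued `χ ∈ Irr(G)`.  If `λ^G` has an `𝔽`-valued non-linear
irreducible constituent, then the average degree of the `𝔽`-valued non-linear irreducible
constituents of `λ^G` together with those of `(λψ)^G` is at least `λ(1)(ψ(1)+1)/2`. -/
theorem stmt19 (G : Type) [Group G] [Fintype G] (N : Subgroup G) [hN : N.Normal]
    (lam psi : ↥N → ℂ) (hlam : IsIrrChar ↥N lam) (hpsi : IsIrrChar ↥N psi)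
    (hlaminv : ∀ (g : G) (n : ↥N), lam ⟨g * n * g⁻¹, hN.conj_mem n n.2 g⟩ = lam n)
    (hpsiinv : ∀ (g : G) (n : ↥N), psi ⟨g * n * g⁻¹, hN.conj_mem n n.2 g⟩ = psi n)
    (hdeg : 1 < (psi 1).re)
    (hprod : IsIrrChar ↥N (fun n => lam n * psi n))
    (P : (G → ℂ) → Prop)
    (hP : P = RatValued ∨ P = RealValued ∨ P = fun _ => True)
    (χ : G → ℂ) (hχ : IsIrrChar G χ) (hχP : P χ) (hres : ∀ n : ↥N, χ n = psi n)
    (S1 : Finset (G → ℂ))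
    (hS1 : ∀ θ : G → ℂ, θ ∈ S1 ↔
      (IsConstituent (Ind N lam) θ ∧ P θ ∧ 1 < (θ 1).re))
    (hne : S1.Nonempty)
    (S : Finset (G → ℂ))
    (hS : ∀ θ : G → ℂ, θ ∈ S ↔
      ((IsConstituent (Ind N lam) θ ∨
        IsConstituent (Ind N (fun n => lam n * psi n)) θ) ∧ P θ ∧ 1 < (θ 1).re)) :
    (lam 1).re * ((psi 1).re + 1) / 2 ≤ (∑ θ ∈ S, (θ 1).re) / S.card := by
  obtain rfl : psi = fun n : N => χ n := funext fun n => (hres n).symm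
  have hPmul (θ : G → ℂ) (hθ : P θ) : P (θ * χ) := by
    rcases hP with rfl | rfl | rfl
    exacts [RatValued.mul hθ hχP, RealValued.mul hθ hχP, trivial]
  have hdegmul (θ : G → ℂ) (hθ : 1 < (θ 1).re) : 1 < ((θ * χ) 1).re :=
    (one_lt_mul_of_lt_of_le hθ hdeg.le).trans_eq (hχ.re_mul_apply_one (θ 1)).symm
  exact stmt19_general hlam hlaminv hχ hdeg hprod (fun θ => And.imp (hPmul θ) (hdegmul θ))
    (hne.imp fun θ => (hS1 θ).1) hS
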